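/- Let γ = [[A,B],[C,D]] ∈ Sp(g,ℝ), Ω ∈ ℍ_g, and W ∈ ℂ^{h×g}, and set Ω̃ = γ·Ω and W̃ = W(CΩ+D)^{-1}. Then (Im Ω̃)^{-1} ᵗW̃ W̄̃ = (CΩ̄+D) (Im Ω)^{-1} ᵗW W̄ (CΩ̄+D)^{-1}, and consequently σ((Im Ω̃)^{-1} ᵗW̃ W̄̃) = σ((Im Ω)^{-1} ᵗW W̄); i.e., the Hermitian form σ((Im Ω)^{-1} ᵗ(dZ) dZ̄) on ℂ^{h×g} is invariant under the Jacobi group action (Ω,Z) ↦ (γ·Ω, (Z+λΩ+μ)(CΩ+D)^{-1}). -/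

import Mathlib

open Matrix Complex MeasureTheory

noncomputable section

/-- The Siegel upper half space of degree `g`. -/
def SiegelUpperHalfSpace (g : ℕ) : Set (Matrix (Fin g) (Fin g) ℂ) :=
  {Ω | Ωᵀ = Ω ∧ (Ω.map Complex.im).PosDef}

/-- The standard symplectic matrix `J_g`. -/
def Jg (g : ℕ) : Matrix (Fin g ⊕ Fin g) (Fin g ⊕ Fin g) ℝ :=
  Matrix.fromBlocks 0 1 (-1) 0

/-- `M ∈ Sp(g,ℝ)`. -/
def IsSymplectic {g : ℕ} (M : Matrix (Fin g ⊕ Fin g) (Fin g ⊕ Fin g) ℝ) : Prop :=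
  Mᵀ * Jg g * M = Jg g

/-- Complexification of a real matrix. -/
def matC {m n : Type*} (M : Matrix m n ℝ) : Matrix m n ℂ := M.map Complex.ofReal

/-- Cast an integer matrix to a real matrix. -/
def matZR {m n : Type*} (M : Matrix m n ℤ) : Matrix m n ℝ := M.map Int.cast

/-- Cast an integer matrix to a complex matrix. -/
def matZC {m n : Type*} (M : Matrix m n ℤ) : Matrix m n ℂ := M.map Int.cast

def blockA {g : ℕ} (M : Matrix (Fin g ⊕ Fin g) (Fin g ⊕ Fin g) ℝ) : Matrix (Fin g) (Fin g) ℂ :=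
  matC M.toBlocks₁₁
def blockB {g : ℕ} (M : Matrix (Fin g ⊕ Fin g) (Fin g ⊕ Fin g) ℝ) : Matrix (Fin g) (Fin g) ℂ :=
  matC M.toBlocks₁₂
def blockC {g : ℕ} (M : Matrix (Fin g ⊕ Fin g) (Fin g ⊕ Fin g) ℝ) : Matrix (Fin g) (Fin g) ℂ :=
  matC M.toBlocks₂₁
def blockD {g : ℕ} (M : Matrix (Fin g ⊕ Fin g) (Fin g ⊕ Fin g) ℝ) : Matrix (Fin g) (Fin g) ℂ :=
  matC M.toBlocks₂₂

/-- The action of `Sp(g,ℝ)` on the Siegel upper half space: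
`M·Ω = (AΩ+B)(CΩ+D)⁻¹`. -/
def spAction {g : ℕ} (M : Matrix (Fin g ⊕ Fin g) (Fin g ⊕ Fin g) ℝ)
    (Ω : Matrix (Fin g) (Fin g) ℂ) : Matrix (Fin g) (Fin g) ℂ :=
  (blockA M * Ω + blockB M) * (blockC M * Ω + blockD M)⁻¹

/-- The Heisenberg group condition: `κ + μᵗλ` symmetric. -/
def IsHeisenberg {g h : ℕ} (lam mu : Matrix (Fin h) (Fin g) ℝ) (kap : Matrix (Fin h) (Fin h) ℝ) :
    Prop :=
  (kap + mu * lamᵀ).IsSymm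

/-- The action of the Jacobi group `G^J = Sp(g,ℝ) ⋉ H_ℝ^{(g,h)}` on `ℍ_g × ℂ^{(h,g)}`:
`(M,(λ,μ;κ))·(Ω,Z) = (M·Ω, (Z+λΩ+μ)(CΩ+D)⁻¹)`. -/
def jacobiAction {g h : ℕ} (M : Matrix (Fin g ⊕ Fin g) (Fin g ⊕ Fin g) ℝ)
    (lam mu : Matrix (Fin h) (Fin g) ℝ)
    (P : Matrix (Fin g) (Fin g) ℂ × Matrix (Fin h) (Fin g) ℂ) :
    Matrix (Fin g) (Fin g) ℂ × Matrix (Fin h) (Fin g) ℂ :=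
  (spAction M P.1, (P.2 + matC lam * P.1 + matC mu) * (blockC M * P.1 + blockD M)⁻¹)

/-!
Write `P = CΩ + D` and let `P'` be the same expression at a second point `Ω'`. Since
`γ [Ω; 1] = [Ω̃; 1] P`, invariance of the symplectic pairing of two column blocks reads
`ᵗP (ᵗΩ̃ - Ω̃') P' = ᵗΩ - Ω'`. At `Ω' = Ω` this shows that `Ω̃` is symmetric, and at `Ω' = Ω̄` that
`ᵗP (Im Ω̃) P̄ = Im Ω`; inverting the latter cancels the factors `P⁻¹` and turns the matrix of the
Hermitian form into its conjugate by `P̄`. The same pairing, before division by `P`, shows that `P`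
is invertible: `P v = 0` would give `ᵗv̄ (Im Ω) v = 0`.
-/

section Matrix

variable {k l m n R : Type*} [Fintype n] [DecidableEq n]

theorem transpose_fromRows_mul_J_mul_fromRows [CommRing R]
    (A B : Matrix n l R) (C D : Matrix n m R) :
    (fromRows A B)ᵀ * J n R * fromRows C D = Bᵀ * C - Aᵀ * D := by
  rw [transpose_fromRows, J, Matrix.mul_assoc, fromBlocks_mul_fromRows, fromCols_mul_fromRows]
  simp only [Matrix.zero_mul, Matrix.neg_mul, Matrix.one_mul, add_zero, Matrix.mul_neg,
    sub_eq_add_neg, add_comm]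

theorem mul_fromRows_one [Semiring R] [Fintype m] (M : Matrix (k ⊕ l) (m ⊕ n) R)
    (X : Matrix m n R) :
    M * fromRows X (1 : Matrix n n R) =
      fromRows (M.toBlocks₁₁ * X + M.toBlocks₁₂) (M.toBlocks₂₁ * X + M.toBlocks₂₂) := by
  nth_rw 1 [← fromBlocks_toBlocks M]
  rw [fromBlocks_mul_fromRows, Matrix.mul_one, Matrix.mul_one]

theorem transpose_mul_sub_transpose_mul_of_mem_symplecticGroup [CommRing R]
    {M : Matrix (n ⊕ n) (n ⊕ n) R} (hM : M ∈ symplecticGroup n R) (X Y : Matrix n n R) :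
    (M.toBlocks₁₁ * X + M.toBlocks₁₂)ᵀ * (M.toBlocks₂₁ * Y + M.toBlocks₂₂) -
      (M.toBlocks₂₁ * X + M.toBlocks₂₂)ᵀ * (M.toBlocks₁₁ * Y + M.toBlocks₁₂) = Xᵀ - Y := by
  let F := fromRows X (1 : Matrix n n R)
  let G := fromRows Y (1 : Matrix n n R)
  have invariant : (M * F)ᵀ * J n R * (M * G) = Fᵀ * J n R * G := by
    calc (M * F)ᵀ * J n R * (M * G) = Fᵀ * (Mᵀ * J n R * M) * G := by
          simp only [transpose_mul, Matrix.mul_assoc]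
      _ = Fᵀ * J n R * G := by rw [SymplecticGroup.mem_iff'.mp hM]
  rw [mul_fromRows_one, mul_fromRows_one, transpose_fromRows_mul_J_mul_fromRows,
    transpose_fromRows_mul_J_mul_fromRows, transpose_one, Matrix.one_mul, Matrix.mul_one]
    at invariant
  rw [← neg_sub, invariant, neg_sub]

theorem isUnit_of_mul_sub_conjTranspose_mul_eq_smul {K : Type*} [Field K]
    [PartialOrder K] [StarRing K] {Q X Z Y : Matrix n n K} {c : K} (hc : c ≠ 0) (hY : Y.PosDef)
    (h : X * Q - Qᴴ * Z = c • Y) : IsUnit Q := by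
  rw [isUnit_iff_isUnit_det, isUnit_iff_ne_zero]
  intro hdet
  obtain ⟨v, hv, hQv⟩ := exists_mulVec_eq_zero_iff.mpr hdet
  have hvQ : star v ᵥ* Qᴴ = 0 := by rw [← star_mulVec, hQv, star_zero]
  have hform : c * (star v ⬝ᵥ Y *ᵥ v) = 0 := by
    rw [← smul_eq_mul, ← dotProduct_smul, ← smul_mulVec, ← h, sub_mulVec, dotProduct_sub,
      ← mulVec_mulVec, ← mulVec_mulVec, hQv, dotProduct_mulVec (star v) Qᴴ, hvQ,
      mulVec_zero, dotProduct_zero, zero_dotProduct, sub_zero]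
  exact (hY.dotProduct_mulVec_pos hv).ne' ((mul_eq_zero.mp hform).resolve_left hc)

theorem inv_mul_transpose_mul_of_congruence [CommRing R] [Fintype m] {P Q Y Y' : Matrix n n R}
    (hP : IsUnit P) (hQ : IsUnit Q) (hY : Pᵀ * Y' * Q = Y) (V W : Matrix m n R) :
    Y'⁻¹ * (V * P⁻¹)ᵀ * (W * Q⁻¹) = Q * (Y⁻¹ * Vᵀ * W) * Q⁻¹ := by
  rw [isUnit_iff_isUnit_det] at hP hQ
  have hPt : IsUnit Pᵀ.det := by rwa [det_transpose]
  have hinv : Y'⁻¹ = Q * Y⁻¹ * Pᵀ := by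
    rw [← hY, Matrix.mul_inv_rev, Matrix.mul_inv_rev, mul_nonsing_inv_cancel_left _ _ hQ,
      nonsing_inv_mul_cancel_right _ _ hPt]
  rw [hinv, transpose_mul, transpose_nonsing_inv]
  simp only [Matrix.mul_assoc, mul_nonsing_inv_cancel_left _ _ hPt]

theorem map_conj_nonsing_inv [CommRing R] [StarRing R] (A : Matrix n n R) :
    A⁻¹.map (starRingEnd R) = (A.map (starRingEnd R))⁻¹ := by
  change (A⁻¹ᵀ)ᴴ = (Aᵀᴴ)⁻¹
  rw [transpose_nonsing_inv, conjTranspose_nonsing_inv]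

end Matrix

section Complexification

variable {l m n : Type*}

theorem map_conj_matC (M : Matrix m n ℝ) : (matC M).map (starRingEnd ℂ) = matC M := by
  ext i j
  exact conj_ofReal (M i j)

theorem map_conj_matC_mul_add_matC [Fintype m] (A : Matrix l m ℝ) (B : Matrix l n ℝ)
    (X : Matrix m n ℂ) :
    (matC A * X + matC B).map (starRingEnd ℂ) = matC A * X.map (starRingEnd ℂ) + matC B := by
  rw [Matrix.map_add _ (map_add _), Matrix.map_mul, map_conj_matC, map_conj_matC]

theorem sub_map_conj (X : Matrix m n ℂ) :
    X - X.map (starRingEnd ℂ) = (2 * I) • matC (X.map Complex.im) := by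
  ext i j
  change X i j - starRingEnd ℂ (X i j) = 2 * I * ((X i j).im : ℂ)
  rw [sub_conj, ofReal_mul, ofReal_ofNat]
  ring

open scoped ComplexOrder MatrixOrder in
theorem posDef_matC [Finite n] {Y : Matrix n n ℝ} (hY : Y.PosDef) :
    (matC Y).PosDef := by
  classical
  cases nonempty_fintype n
  obtain ⟨B, hB, rfl⟩ :=
    CStarAlgebra.isStrictlyPositive_iff_eq_star_mul_self.mp hY.isStrictlyPositive
  have hmul : matC (star B * B) = (matC B)ᴴ * matC B := by
    have hBstar : matC (star B) = (matC B)ᴴ := (congrArg transpose (map_conj_matC B)).symm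
    rw [← hBstar]
    exact Matrix.map_mul (f := ofRealHom)
  rw [hmul]
  exact .conjTranspose_mul_self _ (mulVec_injective_of_isUnit (hB.map ofRealHom.mapMatrix))

end Complexification

/-- The automorphy factor `CΩ + D` of `M = [[A, B], [C, D]]` at `Ω`, the denominator of the
fractional linear action `spAction`. -/
def automorphyFactor {g : ℕ} (M : Matrix (Fin g ⊕ Fin g) (Fin g ⊕ Fin g) ℝ)
    (Ω : Matrix (Fin g) (Fin g) ℂ) : Matrix (Fin g) (Fin g) ℂ :=
  blockC M * Ω + blockD M

section SiegelAction

variable {g : ℕ} {γ : Matrix (Fin g ⊕ Fin g) (Fin g ⊕ Fin g) ℝ} {Ω Ω' : Matrix (Fin g) (Fin g) ℂ}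

theorem map_conj_automorphyFactor (γ : Matrix (Fin g ⊕ Fin g) (Fin g ⊕ Fin g) ℝ)
    (Ω : Matrix (Fin g) (Fin g) ℂ) :
    (automorphyFactor γ Ω).map (starRingEnd ℂ) = automorphyFactor γ (Ω.map (starRingEnd ℂ)) :=
  map_conj_matC_mul_add_matC _ _ Ω

theorem map_conj_spAction (γ : Matrix (Fin g ⊕ Fin g) (Fin g ⊕ Fin g) ℝ)
    (Ω : Matrix (Fin g) (Fin g) ℂ) :
    (spAction γ Ω).map (starRingEnd ℂ) = spAction γ (Ω.map (starRingEnd ℂ)) := by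
  rw [spAction, Matrix.map_mul, map_conj_nonsing_inv]
  exact congrArg₂ (· * ·⁻¹) (map_conj_matC_mul_add_matC _ _ Ω) (map_conj_automorphyFactor γ Ω)

theorem isUnit_automorphyFactor_map_conj (hP : IsUnit (automorphyFactor γ Ω)) :
    IsUnit (automorphyFactor γ (Ω.map (starRingEnd ℂ))) := by
  rw [← map_conj_automorphyFactor]
  exact hP.map (starRingEnd ℂ).mapMatrix

theorem IsSymplectic.matC_mem_symplecticGroup (hγ : IsSymplectic γ) :
    matC γ ∈ symplecticGroup (Fin g) ℂ := by
  refine SymplecticGroup.map_mem (SymplecticGroup.mem_iff'.mpr ?_) ofRealHom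
  have hJ : Jg g = -J (Fin g) ℝ := by simp [Jg, J, fromBlocks_neg]
  simpa [IsSymplectic, hJ] using hγ

open scoped ComplexOrder in
theorem IsSymplectic.isUnit_automorphyFactor (hγ : IsSymplectic γ)
    (hΩ : Ω ∈ SiegelUpperHalfSpace g) : IsUnit (automorphyFactor γ Ω) := by
  obtain ⟨hsymm, hpos⟩ := hΩ
  have hc : -(2 * I) ≠ 0 := neg_ne_zero.mpr (mul_ne_zero two_ne_zero I_ne_zero)
  refine isUnit_of_mul_sub_conjTranspose_mul_eq_smul (X := (blockA γ * Ω + blockB γ)ᴴ)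
    (Z := blockA γ * Ω + blockB γ) hc (posDef_matC hpos) ?_
  have conjTranspose_eq (A B : Matrix (Fin g) (Fin g) ℝ) :
      (matC A * Ω + matC B)ᴴ = (matC A * Ω.map (starRingEnd ℂ) + matC B)ᵀ :=
    congrArg transpose (map_conj_matC_mul_add_matC A B Ω)
  calc (blockA γ * Ω + blockB γ)ᴴ * automorphyFactor γ Ω -
        (automorphyFactor γ Ω)ᴴ * (blockA γ * Ω + blockB γ)
      = (Ω.map (starRingEnd ℂ))ᵀ - Ω := by
        rw [automorphyFactor, blockA, blockB, blockC, blockD, conjTranspose_eq, conjTranspose_eq]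
        exact transpose_mul_sub_transpose_mul_of_mem_symplecticGroup
          hγ.matC_mem_symplecticGroup (Ω.map (starRingEnd ℂ)) Ω
    _ = -(2 * I) • matC (Ω.map Complex.im) := by
        rw [← transpose_map, hsymm, ← neg_sub, sub_map_conj, neg_smul]

theorem IsSymplectic.transpose_automorphyFactor_mul_spAction_sub_mul (hγ : IsSymplectic γ)
    (hP : IsUnit (automorphyFactor γ Ω)) (hP' : IsUnit (automorphyFactor γ Ω')) :
    (automorphyFactor γ Ω)ᵀ * ((spAction γ Ω)ᵀ - spAction γ Ω') * automorphyFactor γ Ω' =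
      Ωᵀ - Ω' := by
  have hcancel {X : Matrix (Fin g) (Fin g) ℂ} (hX : IsUnit (automorphyFactor γ X)) :
      spAction γ X * automorphyFactor γ X = blockA γ * X + blockB γ :=
    nonsing_inv_mul_cancel_right _ _ ((isUnit_iff_isUnit_det _).mp hX)
  rw [Matrix.mul_sub, Matrix.sub_mul, ← transpose_mul, Matrix.mul_assoc, hcancel hP, hcancel hP']
  exact transpose_mul_sub_transpose_mul_of_mem_symplecticGroup hγ.matC_mem_symplecticGroup Ω Ω'

theorem IsSymplectic.isSymm_spAction (hγ : IsSymplectic γ) (hΩ : Ω.IsSymm)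
    (hP : IsUnit (automorphyFactor γ Ω)) : (spAction γ Ω).IsSymm := by
  have h := hγ.transpose_automorphyFactor_mul_spAction_sub_mul hP hP
  have hPt : IsUnit (automorphyFactor γ Ω)ᵀ := (isUnit_transpose _).mpr hP
  rw [hΩ.eq, sub_self, hP.mul_left_eq_zero, hPt.mul_right_eq_zero] at h
  exact sub_eq_zero.mp h

theorem IsSymplectic.transpose_automorphyFactor_mul_im_spAction_mul (hγ : IsSymplectic γ)
    (hΩ : Ω.IsSymm) (hP : IsUnit (automorphyFactor γ Ω)) :
    (automorphyFactor γ Ω)ᵀ * matC ((spAction γ Ω).map Complex.im) *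
      automorphyFactor γ (Ω.map (starRingEnd ℂ)) = matC (Ω.map Complex.im) := by
  have h := hγ.transpose_automorphyFactor_mul_spAction_sub_mul hP
    (isUnit_automorphyFactor_map_conj hP)
  rw [hΩ.eq, (hγ.isSymm_spAction hΩ hP).eq, ← map_conj_spAction, sub_map_conj, sub_map_conj,
    Matrix.mul_smul, Matrix.smul_mul] at h
  exact smul_right_injective _ (mul_ne_zero two_ne_zero I_ne_zero) h

end SiegelAction

theorem hermitian_form_invariant_general {m : Type*} [Fintype m] {g : ℕ}
    {γ : Matrix (Fin g ⊕ Fin g) (Fin g ⊕ Fin g) ℝ} (hγ : IsSymplectic γ)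
    {Ω : Matrix (Fin g) (Fin g) ℂ} (hΩ : Ω.IsSymm) (hY : IsUnit (matC (Ω.map Complex.im)))
    (hP : IsUnit (blockC γ * Ω + blockD γ)) (W : Matrix m (Fin g) ℂ)
    {Ωt : Matrix (Fin g) (Fin g) ℂ} (hΩt : Ωt = spAction γ Ω)
    {Wt : Matrix m (Fin g) ℂ} (hWt : Wt = W * (blockC γ * Ω + blockD γ)⁻¹) :
    IsUnit (matC (Ωt.map Complex.im)) ∧
    (matC (Ωt.map Complex.im))⁻¹ * Wtᵀ * Wt.map (starRingEnd ℂ) =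
      (blockC γ * Ω.map (starRingEnd ℂ) + blockD γ) *
        ((matC (Ω.map Complex.im))⁻¹ * Wᵀ * W.map (starRingEnd ℂ)) *
        (blockC γ * Ω.map (starRingEnd ℂ) + blockD γ)⁻¹ ∧
    ((matC (Ωt.map Complex.im))⁻¹ * Wtᵀ * Wt.map (starRingEnd ℂ)).trace =
      ((matC (Ω.map Complex.im))⁻¹ * Wᵀ * W.map (starRingEnd ℂ)).trace := by
  simp only [← automorphyFactor.eq_def] at hP hWt ⊢
  subst hΩt hWt
  have hQ := isUnit_automorphyFactor_map_conj hP
  have him := hγ.transpose_automorphyFactor_mul_im_spAction_mul hΩ hP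
  rw [Matrix.map_mul, map_conj_nonsing_inv, map_conj_automorphyFactor,
    inv_mul_transpose_mul_of_congruence hP hQ him]
  rw [← him] at hY
  exact ⟨isUnit_of_mul_isUnit_right (isUnit_of_mul_isUnit_left hY), rfl, trace_conj hQ _⟩

/-- for `γ = [[A,B],[C,D]] ∈ Sp(g,ℝ)`, `Ω ∈ ℍ_g`, `W ∈ ℂ^{(h,g)}`, with
`Ω̃ = γ·Ω` and `W̃ = W(CΩ+D)⁻¹`, one has
`(Im Ω̃)⁻¹ ᵗW̃ W̄̃ = (CΩ̄+D) (Im Ω)⁻¹ ᵗW W̄ (CΩ̄+D)⁻¹` and hence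
`σ((Im Ω̃)⁻¹ ᵗW̃ W̄̃) = σ((Im Ω)⁻¹ ᵗW W̄)`; i.e. the Hermitian form
`σ((Im Ω)⁻¹ ᵗ(dZ) dZ̄)` is invariant under the Jacobi group action. -/
theorem hermitian_form_invariant (g h : ℕ) (hg : 0 < g) (hh : 0 < h)
    (γ : Matrix (Fin g ⊕ Fin g) (Fin g ⊕ Fin g) ℝ) (hγ : IsSymplectic γ)
    (Ω : Matrix (Fin g) (Fin g) ℂ) (hΩ : Ω ∈ SiegelUpperHalfSpace g)
    (W : Matrix (Fin h) (Fin g) ℂ)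
    (Ωt : Matrix (Fin g) (Fin g) ℂ) (hΩt : Ωt = spAction γ Ω)
    (Wt : Matrix (Fin h) (Fin g) ℂ) (hWt : Wt = W * (blockC γ * Ω + blockD γ)⁻¹) :
    (matC (Ωt.map Complex.im))⁻¹ * Wtᵀ * Wt.map (starRingEnd ℂ) =
      (blockC γ * Ω.map (starRingEnd ℂ) + blockD γ) *
        ((matC (Ω.map Complex.im))⁻¹ * Wᵀ * W.map (starRingEnd ℂ)) *
        (blockC γ * Ω.map (starRingEnd ℂ) + blockD γ)⁻¹ ∧
    ((matC (Ωt.map Complex.im))⁻¹ * Wtᵀ * Wt.map (starRingEnd ℂ)).trace =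
      ((matC (Ω.map Complex.im))⁻¹ * Wᵀ * W.map (starRingEnd ℂ)).trace := by
  exact (hermitian_form_invariant_general hγ hΩ.1 (hΩ.2.isUnit.map ofRealHom.mapMatrix)
    (hγ.isUnit_automorphyFactor hΩ) W hΩt hWt).2

end
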